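/- arXiv:2511.04261 — 3 statements merged into one kernel-verified Lean document; each statement's English description precedes it below -/
import Mathlib

section
/- Let k ∈ ℕ, ε > 0, let σ : Fin k → ℝ be positive scales, and let x, y : Fin k → ℝ satisfy ∑_{i} |x i − y i| / σ i ≤ ε. Let λ be the product over i ∈ Fin k of the Laplace measures with scale σ i on ℝ, and let μ_x and μ_y be the pushforwards of λ under the translations η ↦ x + η and η ↦ y + η. Then for every measurable set S ⊆ (Fin k → ℝ), μ_x(S) ≤ exp(ε) · μ_y(S). That is, adding independent Laplace noise with possibly different scales σ i to the coordinates of a statistic satisfies ε-differential privacy whenever the σ-weighted L1 distance between the statistics of neighboring inputs is at most ε. -/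
/-!
Translating Laplace noise of scale `s` by `a` moves the centre of its density to `a`, and by the
triangle inequality the densities centred at `a` and at `b` differ by a factor of at most
`exp (|a - b| / s)`. A translate of a product measure is the product of the translates, and
domination of the factors with constants `c i` gives domination of the product with constant
`∏ i, c i`; here this constant is `exp (∑ i, |x i - y i| / σ i) ≤ exp ε`.
-/

open MeasureTheory

/-- The Laplace measure with scale `σ` on `ℝ`. -/
noncomputable def laplaceMeasure (σ : ℝ) : Measure ℝ :=
  volume.withDensity (fun t => ENNReal.ofReal ((1 / (2 * σ)) * Real.exp (-|t| / σ)))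

open scoped ENNReal

section Pi

variable {ι : Type*} [Fintype ι] {α : ι → Type*} [∀ i, MeasurableSpace (α i)]

lemma measurePi_mono {μ ν : ∀ i, Measure (α i)} (h : ∀ i, μ i ≤ ν i) :
    Measure.pi μ ≤ Measure.pi ν := by
  refine Measure.le_iff.2 fun S hS => ?_
  rw [Measure.pi_def, Measure.pi_def, toMeasure_apply _ _ hS, toMeasure_apply _ _ hS]
  refine OuterMeasure.le_pi.2 (fun A _ => ?_) S
  calc OuterMeasure.pi (fun i => (μ i).toOuterMeasure) (Set.univ.pi A)
      ≤ ∏ i, μ i (A i) := OuterMeasure.pi_pi_le _ A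
    _ ≤ ∏ i, ν i (A i) := Finset.prod_le_prod' fun i _ => h i (A i)

lemma measurePi_smul (μ : ∀ i, Measure (α i)) {c : ι → ℝ≥0∞} (hc : ∏ i, c i ≠ ∞) :
    Measure.pi (fun i => c i • μ i) = (∏ i, c i) • Measure.pi μ := by
  have piPremeasure_smul : piPremeasure (fun i => (c i • μ i).toOuterMeasure) =
      (∏ i, c i) • piPremeasure fun i => (μ i).toOuterMeasure := by
    ext A
    simp [piPremeasure, Finset.prod_mul_distrib]
  ext S hS
  rw [Measure.smul_apply, Measure.pi_def, Measure.pi_def, toMeasure_apply _ _ hS,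
    toMeasure_apply _ _ hS, OuterMeasure.pi, OuterMeasure.pi, piPremeasure_smul,
    ← OuterMeasure.smul_boundedBy hc, smul_apply]

lemma map_add_left_measurePi [∀ i, AddGroup (α i)] [∀ i, MeasurableAdd (α i)]
    (μ : ∀ i, Measure (α i)) [∀ i, SigmaFinite (μ i)] (x : ∀ i, α i) :
    (Measure.pi μ).map (fun η => x + η) = Measure.pi fun i => (μ i).map (fun t => x i + t) := by
  have (i : ι) : SigmaFinite ((μ i).map (fun t => x i + t)) :=
    (MeasurableEquiv.addLeft (x i)).sigmaFinite_map
  exact Measure.pi_map_pi (f := fun i t => x i + t) fun i =>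
    (measurable_const_add (x i)).aemeasurable

end Pi

lemma map_add_left_withDensity {G : Type*} [AddGroup G] [MeasurableSpace G] [MeasurableAdd G]
    (μ : Measure G) [μ.IsAddLeftInvariant] (f : G → ℝ≥0∞) (a : G) :
    (μ.withDensity f).map (fun t => a + t) = μ.withDensity fun t => f (-a + t) := by
  ext A hA
  have measurable_add_left := measurable_const_add a
  rw [Measure.map_apply measurable_add_left hA,
    withDensity_apply _ (measurable_add_left hA), withDensity_apply _ hA,
    ← (measurePreserving_add_left μ a).setLIntegral_comp_preimage_emb
      (measurableEmbedding_addLeft a) (fun t => f (-a + t))]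
  simp only [neg_add_cancel_left]

instance sigmaFinite_laplaceMeasure (s : ℝ) : SigmaFinite (laplaceMeasure s) :=
  SigmaFinite.withDensity_ofReal _

lemma map_add_left_laplaceMeasure (s a : ℝ) :
    (laplaceMeasure s).map (fun t => a + t) =
      volume.withDensity
        (fun t => ENNReal.ofReal ((1 / (2 * s)) * Real.exp (-|t - a| / s))) := by
  simp only [laplaceMeasure, map_add_left_withDensity, neg_add_eq_sub]

lemma exp_neg_abs_sub_div_le {s : ℝ} (hs : 0 < s) (a b t : ℝ) :
    Real.exp (-|t - a| / s) ≤ Real.exp (|a - b| / s) * Real.exp (-|t - b| / s) := by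
  rw [← Real.exp_add, ← add_div]
  gcongr
  linarith [abs_sub_le t a b]

lemma map_add_left_laplaceMeasure_le {s : ℝ} (hs : 0 < s) (a b : ℝ) :
    (laplaceMeasure s).map (fun t => a + t) ≤
      ENNReal.ofReal (Real.exp (|a - b| / s)) • (laplaceMeasure s).map (fun t => b + t) := by
  rw [map_add_left_laplaceMeasure, map_add_left_laplaceMeasure,
    ← withDensity_smul _ (by fun_prop)]
  refine withDensity_mono (.of_forall fun t => ?_)
  simp only [Pi.smul_apply, smul_eq_mul]
  rw [← ENNReal.ofReal_mul (Real.exp_pos _).le, mul_left_comm]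
  gcongr
  exact exp_neg_abs_sub_div_le hs a b t

theorem stmt_3_general {ι : Type*} [Fintype ι] {ε : ℝ} {σ : ι → ℝ} (hσ : ∀ i, 0 < σ i)
    {x y : ι → ℝ} (hxy : ∑ i, |x i - y i| / σ i ≤ ε) :
    (Measure.pi fun i => laplaceMeasure (σ i)).map (fun η => x + η) ≤
      ENNReal.ofReal (Real.exp ε) •
        (Measure.pi fun i => laplaceMeasure (σ i)).map (fun η => y + η) := by
  let c (i : ι) : ℝ≥0∞ := ENNReal.ofReal (Real.exp (|x i - y i| / σ i))
  have prod_c : ∏ i, c i = ENNReal.ofReal (Real.exp (∑ i, |x i - y i| / σ i)) := by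
    rw [Real.exp_sum, ENNReal.ofReal_prod_of_nonneg fun i _ => (Real.exp_pos _).le]
  rw [map_add_left_measurePi, map_add_left_measurePi]
  calc Measure.pi (fun i => (laplaceMeasure (σ i)).map (fun t => x i + t))
      ≤ Measure.pi (fun i => c i • (laplaceMeasure (σ i)).map (fun t => y i + t)) :=
        measurePi_mono fun i => map_add_left_laplaceMeasure_le (hσ i) (x i) (y i)
    _ = (∏ i, c i) • Measure.pi (fun i => (laplaceMeasure (σ i)).map (fun t => y i + t)) :=
        measurePi_smul _ (prod_c ▸ ENNReal.ofReal_ne_top)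
    _ ≤ ENNReal.ofReal (Real.exp ε) •
          Measure.pi (fun i => (laplaceMeasure (σ i)).map (fun t => y i + t)) := by
        rw [prod_c]
        gcongr

/-- Heterogeneous-scale Laplace mechanism: with positive scales `σ i` and
`∑ i, |x i − y i| / σ i ≤ ε`, the pushforwards of the product of the Laplace
measures with scales `σ i` under the translations `η ↦ x + η` and `η ↦ y + η`
satisfy `μ_x(S) ≤ exp(ε) · μ_y(S)` for every measurable set `S`. -/
theorem stmt_3 (k : ℕ) (ε : ℝ) (hε : 0 < ε) (σ : Fin k → ℝ) (hσ : ∀ i, 0 < σ i)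
    (x y : Fin k → ℝ) (hxy : ∑ i, |x i - y i| / σ i ≤ ε)
    (S : Set (Fin k → ℝ)) (hS : MeasurableSet S) :
    (Measure.pi fun i => laplaceMeasure (σ i)).map (fun η => x + η) S ≤
      ENNReal.ofReal (Real.exp ε) *
        (Measure.pi fun i => laplaceMeasure (σ i)).map (fun η => y + η) S :=
  stmt_3_general hσ hxy S
end

section
/- (Tightness of the sensitivity bound) Let M = G_R·b and N = G_C·b with G_R, G_C ≥ 1, and let m ≤ b². Then there exist images I₁, I₂ : Fin M × Fin N → ℝ with all values in [0,255] that differ at exactly m positions and satisfy ∑_{(r,c)} |μ_{r,c}(I₁) − μ_{r,c}(I₂)| = 255·m/b². Hence the global L1-sensitivity of the pixelization map over m-neighboring images equals 255·m/b² when m ≤ b². -/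
/-- The `b×b` grid with index `(r,c)`: the positions `(i,j)` with
`r·b ≤ i < (r+1)·b` and `c·b ≤ j < (c+1)·b`. -/
def grid (G_R G_C b : ℕ) (rc : Fin G_R × Fin G_C) :
    Finset (Fin (G_R * b) × Fin (G_C * b)) :=
  Finset.univ.filter (fun p =>
    rc.1.val * b ≤ p.1.val ∧ p.1.val < (rc.1.val + 1) * b ∧
    rc.2.val * b ≤ p.2.val ∧ p.2.val < (rc.2.val + 1) * b)

/-- The grid mean `μ_{r,c}(I) = (1/b²) · ∑_{(i,j) ∈ G_{r,c}} I(i,j)`. -/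
noncomputable def gridMean (G_R G_C b : ℕ) (I : Fin (G_R * b) × Fin (G_C * b) → ℝ)
    (rc : Fin G_R × Fin G_C) : ℝ :=
  (1 / (b : ℝ) ^ 2) * ∑ p ∈ grid G_R G_C b rc, I p

/-!
If `I₂ ≤ I₁` pointwise, no cancellation occurs inside any grid, and since the grids partition the
positions, the L1 distance of the pixelizations is `(∑ I₁ - ∑ I₂) / b²`, wherever the images differ.
Any `m` positions raised from `0` to `255` therefore attain `255·m/b²`.
-/

section GridMean

variable {G_R G_C b : ℕ}

lemma mem_grid_iff_divNat_eq {rc : Fin G_R × Fin G_C} {p : Fin (G_R * b) × Fin (G_C * b)} :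
    p ∈ grid G_R G_C b rc ↔ (p.1.divNat, p.2.divNat) = rc := by
  have hb : 0 < b := Nat.pos_of_mul_pos_left p.1.pos
  simp only [grid, Finset.mem_filter_univ, Prod.ext_iff, Fin.ext_iff, Fin.coe_divNat,
    Nat.div_eq_iff hb, add_mul, one_mul]
  omega

lemma sum_sum_grid {M : Type*} [AddCommMonoid M] (f : Fin (G_R * b) × Fin (G_C * b) → M) :
    ∑ rc, ∑ p ∈ grid G_R G_C b rc, f p = ∑ p, f p := by
  rw [← Finset.sum_fiberwise Finset.univ (fun p ↦ (p.1.divNat, p.2.divNat)) f]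
  congr! with rc
  ext p
  rw [Finset.mem_filter_univ, mem_grid_iff_divNat_eq]

lemma gridMean_mono (rc : Fin G_R × Fin G_C) : Monotone fun I ↦ gridMean G_R G_C b I rc :=
  fun _ _ h ↦ mul_le_mul_of_nonneg_left (Finset.sum_le_sum fun p _ ↦ h p) (by positivity)

lemma sum_gridMean (I : Fin (G_R * b) × Fin (G_C * b) → ℝ) :
    ∑ rc, gridMean G_R G_C b I rc = (∑ p, I p) / (b : ℝ) ^ 2 := by
  simp only [gridMean]
  rw [← Finset.mul_sum, sum_sum_grid, one_div_mul_eq_div]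

lemma sum_abs_gridMean_sub_of_le {I₁ I₂ : Fin (G_R * b) × Fin (G_C * b) → ℝ} (h : I₂ ≤ I₁) :
    ∑ rc, |gridMean G_R G_C b I₁ rc - gridMean G_R G_C b I₂ rc| =
      (∑ p, I₁ p - ∑ p, I₂ p) / (b : ℝ) ^ 2 :=
  calc ∑ rc, |gridMean G_R G_C b I₁ rc - gridMean G_R G_C b I₂ rc|
      = ∑ rc, (gridMean G_R G_C b I₁ rc - gridMean G_R G_C b I₂ rc) :=
        Finset.sum_congr rfl fun rc _ ↦ abs_of_nonneg (sub_nonneg.2 (gridMean_mono rc h))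
    _ = (∑ p, I₁ p - ∑ p, I₂ p) / (b : ℝ) ^ 2 := by
        rw [Finset.sum_sub_distrib, sum_gridMean, sum_gridMean, sub_div]

end GridMean

theorem stmt_10_general (G_R G_C b m : ℕ) (_hb : 0 < b) (hm : m ≤ G_R * b * (G_C * b)) :
    ∃ I₁ I₂ : Fin (G_R * b) × Fin (G_C * b) → ℝ,
      (∀ q, I₁ q ∈ Set.Icc (0 : ℝ) 255) ∧ (∀ q, I₂ q ∈ Set.Icc (0 : ℝ) 255) ∧
      {q | I₁ q ≠ I₂ q}.ncard = m ∧
      ∑ rc : Fin G_R × Fin G_C,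
          |gridMean G_R G_C b I₁ rc - gridMean G_R G_C b I₂ rc| = 255 * m / (b : ℝ) ^ 2 := by
  have m_le_card : m ≤ (Finset.univ : Finset (Fin (G_R * b) × Fin (G_C * b))).card := by
    simpa only [Finset.card_univ, Fintype.card_prod, Fintype.card_fin] using hm
  obtain ⟨S, -, hS⟩ := Finset.exists_subset_card_eq m_le_card
  let I : Fin (G_R * b) × Fin (G_C * b) → ℝ := fun q ↦ if q ∈ S then 255 else 0
  have hI : ∀ q, I q ∈ Set.Icc (0 : ℝ) 255 := fun q ↦ by
    by_cases hq : q ∈ S <;> simp [I, hq]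
  have hsupport : {q | I q ≠ 0} = (S : Set (Fin (G_R * b) × Fin (G_C * b))) := by
    ext q
    simp [I]
  have hsum : ∑ q, I q = 255 * m := by
    simp [I, hS, mul_comm]
  refine ⟨I, 0, hI, fun _ ↦ by simp, ?_, ?_⟩
  · simp only [Pi.zero_apply, hsupport, Set.ncard_coe_finset, hS]
  · have hle : 0 ≤ I := fun q ↦ (hI q).1
    simp only [sum_abs_gridMean_sub_of_le hle, hsum, Pi.zero_apply, Finset.sum_const_zero, sub_zero]

/-- Tightness of the sensitivity bound: for `G_R, G_C ≥ 1` and `m ≤ b²` there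
exist images with values in `[0,255]` differing at exactly `m` positions whose
pixelization vectors are at L1 distance exactly `255·m/b²`. -/
theorem stmt_10 (G_R G_C b m : ℕ) (hR : 1 ≤ G_R) (hC : 1 ≤ G_C) (hb : 0 < b)
    (hm : m ≤ b ^ 2) :
    ∃ I₁ I₂ : Fin (G_R * b) × Fin (G_C * b) → ℝ,
      (∀ q, I₁ q ∈ Set.Icc (0 : ℝ) 255) ∧ (∀ q, I₂ q ∈ Set.Icc (0 : ℝ) 255) ∧
      {q | I₁ q ≠ I₂ q}.ncard = m ∧
      ∑ rc : Fin G_R × Fin G_C,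
          |gridMean G_R G_C b I₁ rc - gridMean G_R G_C b I₂ rc| = 255 * m / (b : ℝ) ^ 2 :=
  stmt_10_general G_R G_C b m hb <| hm.trans <| (sq b).trans_le <|
    Nat.mul_le_mul (Nat.le_mul_of_pos_left b hR) (Nat.le_mul_of_pos_left b hC)
end

section
/- (Weighted sensitivity of region-adaptive pixelization) Let M = G_R·b, N = G_C·b, b = n·s_b with n ≥ 1, and let the grid index set Fin G_R × Fin G_C be partitioned into a set 𝒮 of simple grids and a set 𝒞 of complex grids; each complex grid (r,c) ∈ 𝒞 is subdivided into n² disjoint subgrids of size s_b×s_b with subgrid means ν_{r,c,u,v}(I) for (u,v) ∈ Fin n × Fin n. If I₁, I₂ : Fin M × Fin N → ℝ have all values in [0,255] and differ at at most m positions, then ∑_{(r,c)∈𝒮} (b²/255)·|μ_{r,c}(I₁) − μ_{r,c}(I₂)| + ∑_{(r,c)∈𝒞} ∑_{(u,v)} (s_b²/255)·|ν_{r,c,u,v}(I₁) − ν_{r,c,u,v}(I₂)| ≤ m. -/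
/-- With `b = n·s_b`, the `s_b×s_b` subgrid of the grid `(r,c)` indexed by
`(u,v) ∈ Fin n × Fin n`: the positions `(r·b + u·s_b + p, c·b + v·s_b + q)`
for `(p,q) ∈ Fin s_b × Fin s_b`. -/
def subgrid (G_R G_C n s_b : ℕ) (rc : Fin G_R × Fin G_C) (uv : Fin n × Fin n) :
    Finset (Fin (G_R * (n * s_b)) × Fin (G_C * (n * s_b))) :=
  Finset.univ.filter (fun p =>
    rc.1.val * (n * s_b) + uv.1.val * s_b ≤ p.1.val ∧
    p.1.val < rc.1.val * (n * s_b) + (uv.1.val + 1) * s_b ∧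
    rc.2.val * (n * s_b) + uv.2.val * s_b ≤ p.2.val ∧
    p.2.val < rc.2.val * (n * s_b) + (uv.2.val + 1) * s_b)

/-- The subgrid mean `ν_{r,c,u,v}(I) = (1/s_b²) · ∑` of `I` over the subgrid. -/
noncomputable def subgridMean (G_R G_C n s_b : ℕ)
    (I : Fin (G_R * (n * s_b)) × Fin (G_C * (n * s_b)) → ℝ)
    (rc : Fin G_R × Fin G_C) (uv : Fin n × Fin n) : ℝ :=
  (1 / (s_b : ℝ) ^ 2) * ∑ p ∈ subgrid G_R G_C n s_b rc uv, I p

open Finset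

section DisjointCells

variable {α κ M : Type*}

lemma sum_sum_le_sum_of_pairwiseDisjoint [AddCommMonoid M] [PartialOrder M] [IsOrderedAddMonoid M]
    {t : Finset κ} {cell : κ → Finset α} {u : Finset α} {d : α → M}
    (hdisj : (t : Set κ).PairwiseDisjoint cell) (hsub : ∀ k ∈ t, cell k ⊆ u)
    (hd : ∀ p ∈ u, 0 ≤ d p) :
    ∑ k ∈ t, ∑ p ∈ cell k, d p ≤ ∑ p ∈ u, d p := by
  classical
  rw [← sum_biUnion hdisj]
  exact sum_le_sum_of_subset_of_nonneg (biUnion_subset.mpr hsub) fun p hp _ => hd p hp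

lemma sum_abs_sub_le_ncard_nsmul [Fintype α] [AddCommGroup M] [LinearOrder M]
    [IsOrderedAddMonoid M] {f g : α → M} {R : M} (hR : ∀ p, |f p - g p| ≤ R) :
    ∑ p, |f p - g p| ≤ {p | f p ≠ g p}.ncard • R := by
  classical
  have hsupp : ∑ p with f p ≠ g p, |f p - g p| = ∑ p, |f p - g p| :=
    sum_filter_of_ne fun p _ hp => by simpa [sub_eq_zero] using hp
  rw [← hsupp, Set.ncard_eq_toFinset_card', Set.toFinset_ofPred]
  exact sum_le_card_nsmul _ _ _ fun p _ => hR p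

lemma mul_abs_one_div_mul_sum_sub_le {K : Type*} [Field K] [LinearOrder K] [IsStrictOrderedRing K]
    (s : Finset α) (f g : α → K) {w : K} (hw : 0 < w) :
    w * |1 / w * ∑ p ∈ s, f p - 1 / w * ∑ p ∈ s, g p| ≤ ∑ p ∈ s, |f p - g p| :=
  calc w * |1 / w * ∑ p ∈ s, f p - 1 / w * ∑ p ∈ s, g p| = |∑ p ∈ s, (f p - g p)| := by
        rw [← mul_sub, ← sum_sub_distrib, abs_mul, abs_of_pos (one_div_pos.mpr hw), ← mul_assoc,
          mul_one_div_cancel hw.ne', one_mul]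
    _ ≤ ∑ p ∈ s, |f p - g p| := abs_sum_le_sum_abs _ _

lemma eq_of_mem_Ico_of_monotone {β : Type*} [Preorder β] {f : ℕ → β} (hf : Monotone f)
    {u v : ℕ} {x : β} (hu : x ∈ Set.Ico (f u) (f (u + 1))) (hv : x ∈ Set.Ico (f v) (f (v + 1))) :
    u = v :=
  hf.pairwise_disjoint_on_Ico_succ.eq (Set.not_disjoint_iff.mpr ⟨x, hu, hv⟩)

end DisjointCells

section Pixelization

variable {G_R G_C n s_b : ℕ}

lemma pairwiseDisjoint_grid (b : ℕ) (t : Set (Fin G_R × Fin G_C)) :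
    t.PairwiseDisjoint (grid G_R G_C b) := by
  intro rc _ rc' _ hne
  refine disjoint_left.mpr fun p hp hp' => hne ?_
  simp only [grid, mem_filter_univ] at hp hp'
  obtain ⟨row_lo, row_hi, col_lo, col_hi⟩ := hp
  obtain ⟨row_lo', row_hi', col_lo', col_hi'⟩ := hp'
  have hmono : Monotone fun k : ℕ => k * b := fun _ _ h => Nat.mul_le_mul_right b h
  exact Prod.ext
    (Fin.ext (eq_of_mem_Ico_of_monotone hmono ⟨row_lo, row_hi⟩ ⟨row_lo', row_hi'⟩))
    (Fin.ext (eq_of_mem_Ico_of_monotone hmono ⟨col_lo, col_hi⟩ ⟨col_lo', col_hi'⟩))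

lemma pairwiseDisjoint_subgrid (rc : Fin G_R × Fin G_C) (t : Set (Fin n × Fin n)) :
    t.PairwiseDisjoint (subgrid G_R G_C n s_b rc) := by
  intro uv _ uv' _ hne
  refine disjoint_left.mpr fun p hp hp' => hne ?_
  simp only [subgrid, mem_filter_univ] at hp hp'
  obtain ⟨row_lo, row_hi, col_lo, col_hi⟩ := hp
  obtain ⟨row_lo', row_hi', col_lo', col_hi'⟩ := hp'
  have hmono (o : ℕ) : Monotone fun k : ℕ => o + k * s_b :=
    fun _ _ h => Nat.add_le_add_left (Nat.mul_le_mul_right s_b h) o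
  exact Prod.ext
    (Fin.ext (eq_of_mem_Ico_of_monotone (hmono _) ⟨row_lo, row_hi⟩ ⟨row_lo', row_hi'⟩))
    (Fin.ext (eq_of_mem_Ico_of_monotone (hmono _) ⟨col_lo, col_hi⟩ ⟨col_lo', col_hi'⟩))

lemma subgrid_subset_grid (rc : Fin G_R × Fin G_C) (uv : Fin n × Fin n) :
    subgrid G_R G_C n s_b rc uv ⊆ grid G_R G_C (n * s_b) rc := by
  intro p hp
  simp only [subgrid, grid, mem_filter_univ, Nat.add_one_mul _ (n * s_b)] at hp ⊢
  have hrow : (uv.1.val + 1) * s_b ≤ n * s_b := Nat.mul_le_mul_right _ uv.1.isLt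
  have hcol : (uv.2.val + 1) * s_b ≤ n * s_b := Nat.mul_le_mul_right _ uv.2.isLt
  omega

lemma sq_mul_abs_gridMean_sub_le {b : ℕ} (hb : 0 < b)
    (I₁ I₂ : Fin (G_R * b) × Fin (G_C * b) → ℝ) (rc : Fin G_R × Fin G_C) :
    (b : ℝ) ^ 2 * |gridMean G_R G_C b I₁ rc - gridMean G_R G_C b I₂ rc| ≤
      ∑ p ∈ grid G_R G_C b rc, |I₁ p - I₂ p| :=
  mul_abs_one_div_mul_sum_sub_le _ _ _ (by positivity)

lemma sum_sq_mul_abs_subgridMean_sub_le (hs : 0 < s_b)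
    (I₁ I₂ : Fin (G_R * (n * s_b)) × Fin (G_C * (n * s_b)) → ℝ) (rc : Fin G_R × Fin G_C) :
    ∑ uv : Fin n × Fin n,
        (s_b : ℝ) ^ 2 * |subgridMean G_R G_C n s_b I₁ rc uv - subgridMean G_R G_C n s_b I₂ rc uv| ≤
      ∑ p ∈ grid G_R G_C (n * s_b) rc, |I₁ p - I₂ p| :=
  calc _ ≤ ∑ uv : Fin n × Fin n, ∑ p ∈ subgrid G_R G_C n s_b rc uv, |I₁ p - I₂ p| :=
        sum_le_sum fun _ _ => mul_abs_one_div_mul_sum_sub_le _ _ _ (by positivity)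
    _ ≤ _ := sum_sum_le_sum_of_pairwiseDisjoint (pairwiseDisjoint_subgrid rc _)
        (fun uv _ => subgrid_subset_grid rc uv) fun _ _ => abs_nonneg _

theorem stmt_14_general (hn : 1 ≤ n) (hs : 0 < s_b) {simple complex : Finset (Fin G_R × Fin G_C)}
    (hdisj : Disjoint simple complex) {I₁ I₂ : Fin (G_R * (n * s_b)) × Fin (G_C * (n * s_b)) → ℝ}
    {R : ℝ} (hR : 0 < R) (hI : ∀ q, |I₁ q - I₂ q| ≤ R) :
    ∑ rc ∈ simple, (((n : ℝ) * s_b) ^ 2 / R) *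
        |gridMean G_R G_C (n * s_b) I₁ rc - gridMean G_R G_C (n * s_b) I₂ rc| +
      ∑ rc ∈ complex, ∑ uv : Fin n × Fin n, ((s_b : ℝ) ^ 2 / R) *
        |subgridMean G_R G_C n s_b I₁ rc uv - subgridMean G_R G_C n s_b I₂ rc uv| ≤
      {q | I₁ q ≠ I₂ q}.ncard := by
  simp only [div_mul_eq_mul_div, ← sum_div, ← add_div, ← Nat.cast_mul]
  rw [div_le_iff₀ hR, ← nsmul_eq_mul]
  calc _ ≤ ∑ rc ∈ simple, ∑ p ∈ grid G_R G_C (n * s_b) rc, |I₁ p - I₂ p| +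
        ∑ rc ∈ complex, ∑ p ∈ grid G_R G_C (n * s_b) rc, |I₁ p - I₂ p| :=
        add_le_add
          (sum_le_sum fun rc _ => sq_mul_abs_gridMean_sub_le (Nat.mul_pos hn hs) I₁ I₂ rc)
          (sum_le_sum fun rc _ => sum_sq_mul_abs_subgridMean_sub_le hs I₁ I₂ rc)
    _ = ∑ rc ∈ simple.disjUnion complex hdisj,
          ∑ p ∈ grid G_R G_C (n * s_b) rc, |I₁ p - I₂ p| := (sum_disjUnion hdisj).symm
    _ ≤ ∑ p, |I₁ p - I₂ p| := sum_sum_le_sum_of_pairwiseDisjoint (pairwiseDisjoint_grid _ _)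
        (fun _ _ => subset_univ _) fun _ _ => abs_nonneg _
    _ ≤ _ := sum_abs_sub_le_ncard_nsmul hI

end Pixelization

/-- Weighted sensitivity of region-adaptive pixelization: with the grid index
set partitioned into simple grids `𝒮` and complex grids `𝒞` (each complex grid
subdivided into `n²` subgrids of size `s_b×s_b`), two `[0,255]`-valued images
differing at at most `m` positions satisfy
`∑_{𝒮} (b²/255)·|Δμ| + ∑_{𝒞} ∑_{(u,v)} (s_b²/255)·|Δν| ≤ m`. -/
theorem stmt_14 (G_R G_C n s_b m : ℕ) (hn : 1 ≤ n) (hs : 0 < s_b)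
    (simple complex : Finset (Fin G_R × Fin G_C))
    (hpart : ∀ rc, rc ∈ simple ↔ rc ∉ complex)
    (I₁ I₂ : Fin (G_R * (n * s_b)) × Fin (G_C * (n * s_b)) → ℝ)
    (hI₁ : ∀ q, I₁ q ∈ Set.Icc (0 : ℝ) 255) (hI₂ : ∀ q, I₂ q ∈ Set.Icc (0 : ℝ) 255)
    (hdiff : {q | I₁ q ≠ I₂ q}.ncard ≤ m) :
    ∑ rc ∈ simple, (((n : ℝ) * s_b) ^ 2 / 255) *
        |gridMean G_R G_C (n * s_b) I₁ rc - gridMean G_R G_C (n * s_b) I₂ rc| +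
      ∑ rc ∈ complex, ∑ uv : Fin n × Fin n, ((s_b : ℝ) ^ 2 / 255) *
        |subgridMean G_R G_C n s_b I₁ rc uv - subgridMean G_R G_C n s_b I₂ rc uv| ≤ (m : ℝ) := by
  have hdisj : Disjoint simple complex := disjoint_left.mpr fun rc => (hpart rc).mp
  have hI : ∀ q, |I₁ q - I₂ q| ≤ 255 := fun q => by
    simpa [Real.dist_eq] using Real.dist_le_of_mem_Icc (hI₁ q) (hI₂ q)
  exact (stmt_14_general hn hs hdisj (by norm_num) hI).trans (mod_cast hdiff)
end
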